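/- arXiv:math/0403510 — 2 statements merged into one kernel-verified Lean document; each statement's English description precedes it below -/
import Mathlib

section
/- The real Gamma function satisfies Γ(3/20) = (√π · φ* · √(√10 − √φ*) / (2^(21/20) · 5^(7/8))) · Γ(2/5)⁻¹ · Γ(1/20), where φ* = 5 − √5. -/
open Real

/-!
Write `φ` for the golden ratio and `σ = sin (π / 5)`. Gauss's multiplication formula with five
factors at `1 / 4`, combined with the reflection formula, shows that the product `Γ(x) Γ(1/2 - x)`
at `x = 1/20` is `5 ^ (1/4) * φ` times the same product at `x = 3/20`. Reflection and duplication
together express the quotient `Γ(x) / Γ(1/2 - x)` through `Γ(2 x)`. Multiplying product and quotient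
leaves only `Γ(1/20) ^ 2`, `Γ(3/20) ^ 2` and the ratio `Γ(1/10) / Γ(3/10)`, which the quotient
relation at `1/10` and `3/10` turns into a multiple of `Γ(2/5) ^ 2`. The remaining trigonometric
factors lie in `ℚ(φ, σ)`, where `4 φ σ ^ 2 = √5`, so the constant is a computation with radicals.
-/

section GaussMultiplication

open Finset

theorem convexOn_finset_sum {𝕜 E β ι : Type*} [Semiring 𝕜] [PartialOrder 𝕜] [AddCommMonoid E]
    [AddCommMonoid β] [PartialOrder β] [IsOrderedAddMonoid β] [SMul 𝕜 E] [Module 𝕜 β]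
    {s : Set E} (hs : Convex 𝕜 s) {t : Finset ι} {f : ι → E → β}
    (hf : ∀ i ∈ t, ConvexOn 𝕜 s (f i)) : ConvexOn 𝕜 s (fun x ↦ ∑ i ∈ t, f i x) := by
  refine ⟨hs, fun x hx y hy a b ha hb hab ↦ ?_⟩
  rw [smul_sum, smul_sum, ← sum_add_distrib]
  exact sum_le_sum fun i hi ↦ (hf i hi).2 hx hy ha hb hab

theorem prod_two_mul_sin_pi_mul_div (n : ℕ) :
    ∏ k ∈ range n, 2 * sin (π * ((k + 1) / (n + 1))) = n + 1 := by
  have hμ := Complex.isPrimitiveRoot_exp (n + 1) n.succ_ne_zero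
  have norm_factor : ∀ k ∈ range n,
      ‖1 - Complex.exp (2 * π * Complex.I / (n + 1 : ℕ)) ^ (k + 1)‖ =
        2 * sin (π * ((k + 1) / (n + 1))) := by
    intro k hk
    have hkn : (k : ℝ) < n := by exact_mod_cast mem_range.mp hk
    have hexp : Complex.exp (2 * π * Complex.I / (n + 1 : ℕ)) ^ (k + 1) =
        Complex.exp (Complex.I * (2 * (π * ((k + 1) / (n + 1))) : ℝ)) := by
      rw [← Complex.exp_nat_mul]
      push_cast
      ring_nf
    have hsin : 0 ≤ sin (π * ((k + 1) / (n + 1))) :=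
      sin_nonneg_of_nonneg_of_le_pi (by positivity)
        (mul_le_of_le_one_right pi_pos.le (div_le_one_of_le₀ (by linarith) (by positivity)))
    rw [hexp, norm_sub_rev, Complex.norm_exp_I_mul_ofReal_sub_one,
      mul_div_cancel_left₀ _ two_ne_zero, norm_of_nonneg (by positivity)]
  rw [← prod_congr rfl norm_factor, ← norm_prod, hμ.prod_one_sub_pow_eq_order]
  exact_mod_cast Complex.norm_natCast (n + 1)

theorem prod_Gamma_div_succ (n : ℕ) :
    ∏ k ∈ range n, Gamma ((k + 1) / (n + 1)) = √(2 * π) ^ n / √(n + 1) := by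
  have reflected : ∏ k ∈ range n, Gamma (1 - (k + 1) / (n + 1)) =
      ∏ k ∈ range n, Gamma ((k + 1) / (n + 1)) := by
    rw [← prod_range_reflect]
    refine prod_congr rfl fun k hk ↦ congrArg Gamma ?_
    rw [Nat.sub_sub, Nat.cast_sub (by have := mem_range.mp hk; lia)]
    push_cast
    field_simp
    ring
  have factor (k : ℕ) : Gamma ((k + 1) / (n + 1)) * Gamma (1 - (k + 1) / (n + 1)) =
      2 * π / (2 * sin (π * ((k + 1) / (n + 1)))) := by
    rw [Gamma_mul_Gamma_one_sub, mul_div_mul_left _ _ two_ne_zero]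
  have square : (∏ k ∈ range n, Gamma ((k + 1) / (n + 1))) ^ 2 = (2 * π) ^ n / (n + 1) := by
    nth_rw 1 [sq, ← reflected]
    rw [mul_comm, ← prod_mul_distrib, prod_congr rfl fun k _ ↦ factor k, prod_div_distrib,
      prod_two_mul_sin_pi_mul_div, prod_const, card_range]
  rw [← sq_eq_sq₀ (prod_nonneg fun k _ ↦ (Gamma_pos_of_pos (by positivity)).le) (by positivity),
    square, div_pow, ← pow_mul, mul_comm n, pow_mul, sq_sqrt (by positivity),
    sq_sqrt (by positivity)]

/-- The function which Gauss's multiplication formula with `n` factors asserts to be the Gamma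
function on the positive reals; it is introduced in order to apply the Bohr–Mollerup theorem to it.
The definition is meant for `n ≠ 0`, and `Real.doublingGamma` is the case of two factors. -/
noncomputable def multiplicationGamma (n : ℕ) (s : ℝ) : ℝ :=
  (∏ k ∈ range n, Gamma ((s + k) / n)) * (n ^ (s - 1 / 2) / √(2 * π) ^ (n - 1))

namespace multiplicationGamma

variable {n : ℕ} {s : ℝ}

theorem Gamma_factor_pos (hn : n ≠ 0) (hs : 0 < s) (k : ℕ) : 0 < Gamma ((s + k) / n) :=
  Gamma_pos_of_pos (by positivity)

theorem pos (hn : n ≠ 0) (hs : 0 < s) : 0 < multiplicationGamma n s :=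
  mul_pos (prod_pos fun k _ ↦ Gamma_factor_pos hn hs k) (by positivity)

theorem add_one (hn : n ≠ 0) (hs : s ≠ 0) :
    multiplicationGamma n (s + 1) = s * multiplicationGamma n s := by
  have shift : ∏ k ∈ range n, Gamma ((s + 1 + k) / n) =
      s / n * ∏ k ∈ range n, Gamma ((s + k) / n) := by
    obtain ⟨m, rfl⟩ := Nat.exists_eq_add_one_of_ne_zero hn
    have last : Gamma ((s + 1 + m) / (m + 1 : ℕ)) =
        s / (m + 1 : ℕ) * Gamma (s / (m + 1 : ℕ)) := by
      rw [← Gamma_add_one (by positivity)]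
      congr 1
      push_cast
      field_simp
      ring
    have common : ∀ k ∈ range m, Gamma ((s + 1 + k) / (m + 1 : ℕ)) =
        Gamma ((s + (k + 1 : ℕ)) / (m + 1 : ℕ)) := fun k _ ↦ by
      rw [Nat.cast_add_one k, add_right_comm, add_assoc]
    rw [prod_range_succ, last, prod_congr rfl common, prod_range_succ', Nat.cast_zero, add_zero]
    ring
  rw [multiplicationGamma, multiplicationGamma, shift, add_sub_right_comm,
    rpow_add_one (by positivity)]
  field_simp

theorem one (hn : n ≠ 0) : multiplicationGamma n 1 = 1 := by
  obtain ⟨m, rfl⟩ := Nat.exists_eq_add_one_of_ne_zero hn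
  have last : Gamma ((m + 1) / (m + 1)) = 1 := by
    rw [div_self (by positivity), Gamma_one]
  simp only [multiplicationGamma, prod_range_succ, Nat.cast_add, Nat.cast_one,
    last, add_comm (1 : ℝ), prod_Gamma_div_succ, Nat.add_sub_cancel]
  rw [show (1 : ℝ) - 1 / 2 = 1 / 2 by norm_num, ← sqrt_eq_rpow]
  field_simp

theorem log_eq (hn : n ≠ 0) (hs : 0 < s) :
    log (multiplicationGamma n s) =
      (∑ k ∈ range n, log (Gamma ((s + k) / n))) + (s - 1 / 2) * log n
        - log (√(2 * π) ^ (n - 1)) := by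
  have hΓ (k : ℕ) := (Gamma_factor_pos hn hs k).ne'
  rw [multiplicationGamma, log_mul (prod_ne_zero_iff.mpr fun k _ ↦ hΓ k) (by positivity),
    log_prod fun k _ ↦ hΓ k, log_div (by positivity) (by positivity), log_rpow (by positivity)]
  ring

theorem convexOn_log (hn : n ≠ 0) :
    ConvexOn ℝ (Set.Ioi 0) (log ∘ multiplicationGamma n) := by
  have convex_summand (k : ℕ) : ConvexOn ℝ (Set.Ioi 0) (fun s : ℝ ↦ log (Gamma ((s + k) / n))) := by
    refine ⟨convex_Ioi 0, fun x hx y hy a b ha hb hab ↦ ?_⟩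
    have hx : 0 < x := hx
    have hy : 0 < y := hy
    have h := convexOn_log_Gamma.2 (x := (x + k) / n) (y := (y + k) / n)
      (Set.mem_Ioi.mpr (by positivity)) (Set.mem_Ioi.mpr (by positivity)) ha hb hab
    rwa [show a • ((x + k) / n) + b • ((y + k) / n) = (a • x + b • y + k) / n by
      simp only [smul_eq_mul]
      linear_combination (k : ℝ) / n * hab] at h
  have convex_linear : ConvexOn ℝ (Set.Ioi 0) (fun s : ℝ ↦ log n * s) :=
    (convexOn_id (convex_Ioi 0)).smul (log_natCast_nonneg n)
  have convex_sum := convexOn_finset_sum (convex_Ioi 0) (t := range n) fun k _ ↦ convex_summand k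
  refine ((convex_sum.add convex_linear).add_const
    (-(1 / 2 * log n) - log (√(2 * π) ^ (n - 1)))).congr fun s hs ↦ ?_
  simp only [Pi.add_apply, Function.comp_apply, log_eq hn hs]
  ring

theorem eq_Gamma (hn : n ≠ 0) (hs : 0 < s) : multiplicationGamma n s = Gamma s :=
  eq_Gamma_of_log_convex (convexOn_log hn) (fun hy ↦ add_one hn hy.ne') (pos hn) (one hn) hs

end multiplicationGamma

theorem prod_Gamma_add_div {n : ℕ} (hn : n ≠ 0) {s : ℝ} (hs : 0 < s) :
    ∏ k ∈ range n, Gamma ((s + k) / n) = √(2 * π) ^ (n - 1) * n ^ (1 / 2 - s) * Gamma s := by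
  rw [← multiplicationGamma.eq_Gamma hn hs, multiplicationGamma, ← neg_sub s,
    rpow_neg (by positivity)]
  field_simp

end GaussMultiplication

theorem Gamma_mul_sqrt_pi {x : ℝ} (hx : cos (π * x) ≠ 0) :
    Gamma x * √π = 2 ^ (1 - 2 * x) * cos (π * x) * Gamma (2 * x) * Gamma (1 / 2 - x) := by
  have reflection : Gamma (x + 1 / 2) * Gamma (1 / 2 - x) * cos (π * x) = π := by
    have h := Gamma_mul_Gamma_one_sub (x + 1 / 2)
    rwa [show 1 - (x + 1 / 2) = 1 / 2 - x by ring, show π * (x + 1 / 2) = π * x + π / 2 by ring,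
      sin_add_pi_div_two, eq_div_iff hx] at h
  refine mul_right_cancel₀ (sqrt_ne_zero'.mpr pi_pos) ?_
  calc Gamma x * √π * √π
      = Gamma x * Gamma (x + 1 / 2) * Gamma (1 / 2 - x) * cos (π * x) := by
        rw [mul_assoc, mul_self_sqrt pi_pos.le]
        linear_combination -Gamma x * reflection
    _ = _ := by rw [Gamma_mul_Gamma_add_half]; ring

section GoldenRatio

open scoped goldenRatio

theorem cos_pi_div_five_eq_goldenRatio_div_two : cos (π / 5) = φ / 2 := by
  rw [cos_pi_div_five, goldenRatio]
  ring

theorem sin_two_mul_pi_div_five : sin (2 * (π / 5)) = φ * sin (π / 5) := by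
  rw [sin_two_mul, cos_pi_div_five_eq_goldenRatio_div_two]
  ring

theorem sin_pi_div_five_pos : 0 < sin (π / 5) :=
  sin_pos_of_pos_of_lt_pi (by positivity) (by linarith [pi_pos])

theorem eight_mul_sin_pi_div_five_sq : 8 * sin (π / 5) ^ 2 = 5 - √5 := by
  rw [sin_sq, cos_pi_div_five]
  linear_combination (-1 / 2) * sq_sqrt (show (0 : ℝ) ≤ 5 by norm_num)

theorem four_mul_goldenRatio_mul_sin_pi_div_five_sq : 4 * φ * sin (π / 5) ^ 2 = √5 := by
  rw [goldenRatio]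
  linear_combination (1 + √5) / 4 * eight_mul_sin_pi_div_five_sq -
    1 / 4 * sq_sqrt (show (0 : ℝ) ≤ 5 by norm_num)

theorem cos_pi_mul_one_div_ten : cos (π * (1 / 10)) = φ * sin (π / 5) := by
  rw [← sin_two_mul_pi_div_five, ← cos_pi_div_two_sub]
  ring_nf

theorem cos_pi_mul_three_div_ten : cos (π * (3 / 10)) = sin (π / 5) := by
  rw [← cos_pi_div_two_sub]
  ring_nf

theorem cos_pi_mul_three_div_twenty :
    cos (π * (3 / 20)) = cos (π * (1 / 20)) * (2 * φ * sin (π / 5) - 1) := by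
  rw [show π * (3 / 20) = 3 * (π * (1 / 20)) by ring, cos_three_mul, mul_assoc 2,
    ← cos_pi_mul_one_div_ten, show π * (1 / 10) = 2 * (π * (1 / 20)) by ring, cos_two_mul]
  ring

theorem cos_pi_mul_pos {x : ℝ} (hx₀ : -(1 / 2) < x) (hx : x < 1 / 2) : 0 < cos (π * x) :=
  cos_pos_of_mem_Ioo ⟨by nlinarith [pi_pos], by nlinarith [pi_pos]⟩

theorem Gamma_quintuplication_at_one_fourth :
    Gamma (1 / 20) * Gamma (9 / 20) * Gamma (13 / 20) * Gamma (17 / 20) =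
      4 * π ^ 2 * 5 ^ (1 / 4 : ℝ) := by
  have factors : ∏ k ∈ Finset.range 5, Gamma ((1 / 4 + k) / (5 : ℕ)) =
      Gamma (1 / 20) * Gamma (1 / 4) * Gamma (9 / 20) * Gamma (13 / 20) * Gamma (17 / 20) := by
    norm_num [Finset.prod_range_succ]
  have hpow : √(2 * π) ^ (5 - 1) = 4 * π ^ 2 := by
    rw [show √(2 * π) ^ (5 - 1) = (√(2 * π) ^ 2) ^ 2 by ring, sq_sqrt (by positivity)]
    ring
  have gauss := prod_Gamma_add_div (n := 5) (by norm_num) (s := 1 / 4) (by norm_num)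
  rw [factors, hpow, Nat.cast_ofNat, show (1 / 2 - 1 / 4 : ℝ) = 1 / 4 by norm_num] at gauss
  refine mul_right_cancel₀ (Gamma_pos_of_pos (show (0 : ℝ) < 1 / 4 by norm_num)).ne' ?_
  linear_combination gauss

theorem Gamma_mul_Gamma_one_div_twenty :
    Gamma (1 / 20) * Gamma (9 / 20) = 5 ^ (1 / 4 : ℝ) * φ * (Gamma (3 / 20) * Gamma (7 / 20)) := by
  have hcos : 0 < cos (π * (3 / 20)) := cos_pi_mul_pos (by norm_num) (by norm_num)
  have hsin : 0 < sin (π * (3 / 20)) :=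
    sin_pos_of_pos_of_lt_pi (by positivity) (by linarith [pi_pos])
  have reflection₃ : Gamma (3 / 20) * Gamma (17 / 20) * sin (π * (3 / 20)) = π := by
    have h := Gamma_mul_Gamma_one_sub (3 / 20)
    rwa [show (1 : ℝ) - 3 / 20 = 17 / 20 by norm_num, eq_div_iff hsin.ne'] at h
  have reflection₇ : Gamma (7 / 20) * Gamma (13 / 20) * cos (π * (3 / 20)) = π := by
    have h := Gamma_mul_Gamma_one_sub (7 / 20)
    rwa [show (1 : ℝ) - 7 / 20 = 13 / 20 by norm_num,
      show π * (7 / 20) = π / 2 - π * (3 / 20) by ring, sin_pi_div_two_sub,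
      eq_div_iff hcos.ne'] at h
  have double_angle : 4 * (sin (π * (3 / 20)) * cos (π * (3 / 20))) = φ := by
    have h := sin_two_mul (π * (3 / 20))
    rw [show 2 * (π * (3 / 20)) = π / 2 - π / 5 by ring, sin_pi_div_two_sub,
      cos_pi_div_five_eq_goldenRatio_div_two] at h
    linear_combination -2 * h
  have h₁₃ := Gamma_pos_of_pos (show (0 : ℝ) < 13 / 20 by norm_num)
  have h₁₇ := Gamma_pos_of_pos (show (0 : ℝ) < 17 / 20 by norm_num)
  refine mul_right_cancel₀ (mul_pos h₁₃ h₁₇).ne' ?_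
  calc Gamma (1 / 20) * Gamma (9 / 20) * (Gamma (13 / 20) * Gamma (17 / 20))
      = 4 * π ^ 2 * 5 ^ (1 / 4 : ℝ) := by rw [← Gamma_quintuplication_at_one_fourth]; ring
    _ = 4 * ((Gamma (3 / 20) * Gamma (17 / 20) * sin (π * (3 / 20))) *
          (Gamma (7 / 20) * Gamma (13 / 20) * cos (π * (3 / 20)))) * 5 ^ (1 / 4 : ℝ) := by
        rw [reflection₃, reflection₇]; ring
    _ = _ := by rw [← double_angle]; ring

theorem Gamma_one_div_ten_mul_pi :
    Gamma (1 / 10) * π =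
      2 ^ (2 / 5 : ℝ) * φ ^ 2 * sin (π / 5) * Gamma (2 / 5) ^ 2 * Gamma (3 / 10) := by
  have quotient₁ : Gamma (1 / 10) * √π =
      2 ^ (4 / 5 : ℝ) * (φ * sin (π / 5)) * Gamma (1 / 5) * Gamma (2 / 5) := by
    rw [← cos_pi_mul_one_div_ten]
    convert Gamma_mul_sqrt_pi (cos_pi_mul_pos (x := 1 / 10) (by norm_num) (by norm_num)).ne' using 4
      <;> norm_num
  have quotient₃ : Gamma (3 / 10) * √π =
      2 ^ (2 / 5 : ℝ) * sin (π / 5) * Gamma (3 / 5) * Gamma (1 / 5) := by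
    rw [← cos_pi_mul_three_div_ten]
    convert Gamma_mul_sqrt_pi (cos_pi_mul_pos (x := 3 / 10) (by norm_num) (by norm_num)).ne' using 4
      <;> norm_num
  have reflection : Gamma (2 / 5) * Gamma (3 / 5) * (φ * sin (π / 5)) = π := by
    have h := Gamma_mul_Gamma_one_sub (2 / 5)
    have hpos := mul_pos goldenRatio_pos sin_pi_div_five_pos
    rwa [show (1 : ℝ) - 2 / 5 = 3 / 5 by norm_num, show π * (2 / 5) = 2 * (π / 5) by ring,
      sin_two_mul_pi_div_five, eq_div_iff hpos.ne'] at h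
  have hpow : (2 : ℝ) ^ (4 / 5 : ℝ) = 2 ^ (2 / 5 : ℝ) * 2 ^ (2 / 5 : ℝ) := by
    rw [← rpow_add two_pos]
    norm_num
  refine mul_right_cancel₀ (sqrt_ne_zero'.mpr pi_pos) ?_
  calc Gamma (1 / 10) * π * √π
      = Gamma (1 / 10) * √π * (Gamma (2 / 5) * Gamma (3 / 5) * (φ * sin (π / 5))) := by
        rw [reflection]; ring
    _ = 2 ^ (2 / 5 : ℝ) * φ ^ 2 * sin (π / 5) * Gamma (2 / 5) ^ 2 * (Gamma (3 / 10) * √π) := by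
        rw [quotient₁, quotient₃, hpow]; ring
    _ = _ := by ring

theorem Gamma_one_div_twenty_sq_mul :
    (2 * φ * sin (π / 5) - 1) * Gamma (1 / 20) ^ 2 * Gamma (3 / 10) =
      2 ^ (1 / 5 : ℝ) * 5 ^ (1 / 4 : ℝ) * φ * Gamma (1 / 10) * Gamma (3 / 20) ^ 2 := by
  have hcos := cos_pi_mul_pos (x := 1 / 20) (by norm_num) (by norm_num)
  have quotient₁ : Gamma (1 / 20) * √π =
      2 ^ (9 / 10 : ℝ) * cos (π * (1 / 20)) * Gamma (1 / 10) * Gamma (9 / 20) := by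
    convert Gamma_mul_sqrt_pi hcos.ne' using 4 <;> norm_num
  have quotient₃ : Gamma (3 / 20) * √π = 2 ^ (7 / 10 : ℝ) *
      (cos (π * (1 / 20)) * (2 * φ * sin (π / 5) - 1)) * Gamma (3 / 10) * Gamma (7 / 20) := by
    rw [← cos_pi_mul_three_div_twenty]
    convert Gamma_mul_sqrt_pi (cos_pi_mul_pos (x := 3 / 20) (by norm_num) (by norm_num)).ne' using 4
      <;> norm_num
  have hpow : (2 : ℝ) ^ (9 / 10 : ℝ) = 2 ^ (1 / 5 : ℝ) * 2 ^ (7 / 10 : ℝ) := by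
    rw [← rpow_add two_pos]
    norm_num
  have := Gamma_pos_of_pos (show (0 : ℝ) < 7 / 20 by norm_num)
  refine mul_right_cancel₀
    (show 2 ^ (7 / 10 : ℝ) * cos (π * (1 / 20)) * Gamma (7 / 20) ≠ 0 by positivity) ?_
  calc _ = Gamma (1 / 20) ^ 2 * (Gamma (3 / 20) * √π) := by rw [quotient₃]; ring
    _ = Gamma (1 / 20) * Gamma (3 / 20) * (Gamma (1 / 20) * √π) := by ring
    _ = Gamma (3 / 20) * 2 ^ (1 / 5 : ℝ) * 2 ^ (7 / 10 : ℝ) * cos (π * (1 / 20)) *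
          Gamma (1 / 10) * (Gamma (1 / 20) * Gamma (9 / 20)) := by rw [quotient₁, hpow]; ring
    _ = _ := by rw [Gamma_mul_Gamma_one_div_twenty]; ring

theorem sq_Gamma_mul_Gamma_three_div_twenty :
    2 ^ (3 / 5 : ℝ) * 5 ^ (1 / 4 : ℝ) * φ ^ 3 * sin (π / 5) *
        (Gamma (3 / 20) * Gamma (2 / 5)) ^ 2 =
      π * (2 * φ * sin (π / 5) - 1) * Gamma (1 / 20) ^ 2 := by
  have hpow : (2 : ℝ) ^ (3 / 5 : ℝ) = 2 ^ (1 / 5 : ℝ) * 2 ^ (2 / 5 : ℝ) := by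
    rw [← rpow_add two_pos]
    norm_num
  refine mul_right_cancel₀ (Gamma_pos_of_pos (show (0 : ℝ) < 3 / 10 by norm_num)).ne' ?_
  rw [hpow]
  linear_combination -π * Gamma_one_div_twenty_sq_mul -
    2 ^ (1 / 5 : ℝ) * 5 ^ (1 / 4 : ℝ) * φ * Gamma (3 / 20) ^ 2 * Gamma_one_div_ten_mul_pi

theorem sqrt_ten_sub_sqrt_five_sub_sqrt_five :
    √10 - √(5 - √5) = √2 * (√5 - 2 * sin (π / 5)) := by
  have nested : √(5 - √5) = 2 * √2 * sin (π / 5) := by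
    rw [← eight_mul_sin_pi_div_five_sq, sqrt_mul (by norm_num), sqrt_sq sin_pi_div_five_pos.le,
      show (8 : ℝ) = 2 ^ 2 * 2 by norm_num, sqrt_mul (by norm_num), sqrt_sq (by norm_num)]
  rw [nested, show (10 : ℝ) = 2 * 5 by norm_num, sqrt_mul (by norm_num)]
  ring

theorem sq_sqrt_ten_sub_sqrt_mul :
    ((5 - √5) * √(√10 - √(5 - √5))) ^ 2 * (φ ^ 3 * sin (π / 5)) =
      √2 ^ 3 * √5 ^ 3 * (2 * φ * sin (π / 5) - 1) := by
  have hσ : 2 * sin (π / 5) ≤ √5 :=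
    (by linarith [sin_le_one (π / 5)] : 2 * sin (π / 5) ≤ 2).trans (le_sqrt_of_sq_le (by norm_num))
  have h₂ : √2 ^ 2 = 2 := sq_sqrt two_pos.le
  have h₅ : √5 ^ 2 = 5 := sq_sqrt (by norm_num)
  rw [mul_pow, sqrt_ten_sub_sqrt_five_sub_sqrt_five,
    sq_sqrt (mul_nonneg (sqrt_nonneg 2) (sub_nonneg.mpr hσ))]
  set σ := sin (π / 5)
  have h₄ : 4 * φ * σ ^ 2 = √5 := four_mul_goldenRatio_mul_sin_pi_div_five_sq
  calc (5 - √5) ^ 2 * (√2 * (√5 - 2 * σ)) * (φ ^ 3 * σ)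
      = 4 * √2 * φ * σ * (4 * φ * σ ^ 2) ^ 2 * (√5 - 2 * σ) := by
        rw [← eight_mul_sin_pi_div_five_sq]; ring
    _ = 4 * √2 * φ * σ * 5 * (√5 - 2 * σ) := by rw [h₄, h₅]
    _ = 10 * √2 * (2 * φ * σ * √5 - 4 * φ * σ ^ 2) := by ring
    _ = √2 ^ 3 * √5 ^ 3 * (2 * φ * σ - 1) := by
        rw [h₄, pow_succ √2 2, pow_succ √5 2, h₂, h₅]; ring

theorem sq_gamma_three_twentieths_coefficient :
    (√π * (5 - √5) * √(√10 - √(5 - √5)) / (2 ^ (21 / 20 : ℝ) * 5 ^ (7 / 8 : ℝ))) ^ 2 *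
        (2 ^ (3 / 5 : ℝ) * 5 ^ (1 / 4 : ℝ) * φ ^ 3 * sin (π / 5)) =
      π * (2 * φ * sin (π / 5) - 1) := by
  have hpow₂ : ((2 : ℝ) ^ (21 / 20 : ℝ)) ^ 2 = √2 ^ 3 * 2 ^ (3 / 5 : ℝ) := by
    rw [sqrt_eq_rpow, ← rpow_mul_natCast two_pos.le, ← rpow_mul_natCast two_pos.le,
      ← rpow_add two_pos]
    norm_num
  have hpow₅ : ((5 : ℝ) ^ (7 / 8 : ℝ)) ^ 2 = √5 ^ 3 * 5 ^ (1 / 4 : ℝ) := by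
    rw [sqrt_eq_rpow, ← rpow_mul_natCast (by norm_num), ← rpow_mul_natCast (by norm_num),
      ← rpow_add (by norm_num)]
    norm_num
  rw [div_pow, mul_pow (_ ^ _), hpow₂, hpow₅, mul_assoc, mul_pow, sq_sqrt pi_pos.le,
    div_mul_eq_mul_div, div_eq_iff (by positivity)]
  linear_combination π * 2 ^ (3 / 5 : ℝ) * 5 ^ (1 / 4 : ℝ) * sq_sqrt_ten_sub_sqrt_mul

end GoldenRatio

theorem gamma_three_twentieths :
    Real.Gamma (3/20) =
      (Real.sqrt π * (5 - Real.sqrt 5) * Real.sqrt (Real.sqrt 10 - Real.sqrt (5 - Real.sqrt 5)) /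
          ((2:ℝ) ^ ((21:ℝ)/20) * (5:ℝ) ^ ((7:ℝ)/8))) *
        (Real.Gamma (2/5))⁻¹ * Real.Gamma (1/20) := by
  have := Gamma_pos_of_pos (show (0 : ℝ) < 1 / 20 by norm_num)
  have := Gamma_pos_of_pos (show (0 : ℝ) < 3 / 20 by norm_num)
  have hΓ := Gamma_pos_of_pos (show (0 : ℝ) < 2 / 5 by norm_num)
  have hσ := sin_pi_div_five_pos
  have := goldenRatio_pos
  have hsqrt : 0 ≤ 5 - √5 := by linarith [eight_mul_sin_pi_div_five_sq, sq_nonneg (sin (π / 5))]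
  rw [mul_right_comm, ← div_eq_mul_inv, eq_div_iff hΓ.ne', ← sq_eq_sq₀ (by positivity)
    (by positivity), mul_pow (_ / _)]
  refine mul_left_cancel₀ (show 2 ^ (3 / 5 : ℝ) * 5 ^ (1 / 4 : ℝ) * goldenRatio ^ 3 *
    sin (π / 5) ≠ 0 by positivity) ?_
  rw [sq_Gamma_mul_Gamma_three_div_twenty, ← sq_gamma_three_twentieths_coefficient]
  ring
end

section
/- The real Gamma function satisfies Γ(13/24) = 2^(2/3) · 3^(3/8) · √(√3 + 1) · Γ(1/3) · Γ(1/4) · Γ(1/24)⁻¹. -/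
open Real

/-!
The Bohr–Mollerup theorem yields Gauss's multiplication formula: a suitably scaled product of the
`Γ((s + k) / n)`, `k < n`, is log-convex and satisfies the functional equation of `Γ`, so it is a
constant multiple of `Γ`. Its case `n = 3` at `s = 1/12`, with reflection at `1/4`, expresses
`Γ(1/12) Γ(5/12)` through `Γ(1/4)`. Duplication at `1/12` and `1/6`, with reflection at `5/12` and
`1/3`, expresses `Γ(1/12) / Γ(5/12)` through `Γ(1/3)`. Multiplying the two gives `Γ(1/12) ^ 2`, and
duplication at `1/24` turns `Γ(1/12)` into `Γ(1/24) Γ(13/24)`.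
-/

section Multiplication

theorem eqOn_mul_Gamma_of_log_convex {f : ℝ → ℝ}
    (hf_conv : ConvexOn ℝ (Set.Ioi 0) (log ∘ f))
    (hf_feq : ∀ {y : ℝ}, 0 < y → f (y + 1) = y * f y)
    (hf_pos : ∀ {y : ℝ}, 0 < y → 0 < f y) :
    Set.EqOn f (fun s ↦ f 1 * Gamma s) (Set.Ioi 0) := by
  have hf_one : 0 < f 1 := hf_pos one_pos
  have hconv : ConvexOn ℝ (Set.Ioi 0) (log ∘ fun s ↦ f s / f 1) :=
    (hf_conv.add_const (-log (f 1))).congr fun s hs ↦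
      ((log_div (hf_pos hs).ne' hf_one.ne').trans (sub_eq_add_neg _ _)).symm
  intro s hs
  have hnormalized : f s / f 1 = Gamma s :=
    eq_Gamma_of_log_convex hconv
      (fun hy ↦ by rw [hf_feq hy, mul_div_assoc])
      (fun hy ↦ div_pos (hf_pos hy) hf_one) (div_self hf_one.ne') hs
  exact ((div_eq_iff hf_one.ne').mp hnormalized).trans (mul_comm _ _)

theorem convexOn_log_Gamma_add_div {a b : ℝ} (ha : 0 ≤ a) (hb : 0 < b) :
    ConvexOn ℝ (Set.Ioi 0) fun s ↦ log (Gamma ((s + a) / b)) := by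
  let g : ℝ →ᵃ[ℝ] ℝ := b⁻¹ • (AffineMap.id ℝ ℝ + AffineMap.const ℝ ℝ a)
  have hg (s : ℝ) : g s = (s + a) / b := by simp [g, div_eq_inv_mul, mul_add]
  refine ((convexOn_log_Gamma.comp_affineMap g).subset (fun s hs ↦ ?_) (convex_Ioi 0)).congr
    fun s _ ↦ by simp only [Function.comp_apply, hg]
  rw [Set.mem_preimage, hg]
  exact div_pos (add_pos_of_pos_of_nonneg hs ha) hb

/-- The product of Gauss's multiplication formula for `Γ s`. The factor `n ^ (s - 1)` makes it
satisfy the functional equation of `Γ`. -/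
noncomputable def gaussProduct (n : ℕ) (s : ℝ) : ℝ :=
  (n : ℝ) ^ (s - 1) * ∏ k ∈ Finset.range n, Gamma ((s + k) / n)

variable {n : ℕ} {s : ℝ}

theorem gaussProduct_pos (hn : n ≠ 0) (hs : 0 < s) : 0 < gaussProduct n s :=
  mul_pos (by positivity) (Finset.prod_pos fun k _ ↦ by positivity)

theorem gaussProduct_add_one (hn : n ≠ 0) (hs : s ≠ 0) :
    gaussProduct n (s + 1) = s * gaussProduct n s := by
  obtain ⟨m, rfl⟩ := Nat.exists_eq_succ_of_ne_zero hn
  have hm : ((m + 1 : ℕ) : ℝ) ≠ 0 := by positivity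
  have hshift (k : ℕ) : s + 1 + k = s + ((k + 1 : ℕ) : ℝ) := by push_cast; ring
  have hlast : (s + ((m + 1 : ℕ) : ℝ)) / ((m + 1 : ℕ) : ℝ) = s / ((m + 1 : ℕ) : ℝ) + 1 := by
    rw [add_div, div_self hm]
  have hpow : ((m + 1 : ℕ) : ℝ) ^ (s + 1 - 1) = ((m + 1 : ℕ) : ℝ) ^ (s - 1) * (m + 1 : ℕ) := by
    rw [← rpow_add_one hm, sub_add_cancel, add_sub_cancel_right]
  simp only [gaussProduct, hshift, hpow]
  -- Shifting `s` by one trades the factor `Γ (s / n)` for `Γ (s / n + 1)` and keeps the others.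
  rw [Finset.prod_range_succ, hlast, Gamma_add_one (div_ne_zero hs hm),
    Finset.prod_range_succ', Nat.cast_zero, add_zero]
  field_simp

theorem convexOn_log_gaussProduct (hn : n ≠ 0) :
    ConvexOn ℝ (Set.Ioi 0) (log ∘ gaussProduct n) := by
  have hn' : (0 : ℝ) < n := by positivity
  have hprod : ConvexOn ℝ (Set.Ioi (0 : ℝ))
      (∑ k ∈ Finset.range n, fun s ↦ log (Gamma ((s + k) / n))) :=
    Finset.sum_induction _ _ (fun _ _ ↦ ConvexOn.add) (convexOn_const 0 (convex_Ioi 0))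
      fun k _ ↦ convexOn_log_Gamma_add_div k.cast_nonneg hn'
  have hlin : ConvexOn ℝ (Set.Ioi (0 : ℝ)) fun s ↦ log n * s :=
    (LinearMap.mul ℝ ℝ (log n)).convexOn (convex_Ioi 0)
  refine ((hlin.add_const (-log n)).add hprod).congr fun s hs ↦ ?_
  rw [Set.mem_Ioi] at hs
  have hΓ (k : ℕ) : Gamma ((s + k) / n) ≠ 0 := by positivity
  simp only [Function.comp_apply, gaussProduct, Pi.add_apply, Finset.sum_apply]
  rw [log_mul (by positivity) (Finset.prod_ne_zero_iff.mpr fun k _ ↦ hΓ k), log_rpow hn',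
    log_prod fun k _ ↦ hΓ k]
  ring

theorem gaussProduct_eq_gaussProduct_one_mul_Gamma (hn : n ≠ 0) (hs : 0 < s) :
    gaussProduct n s = gaussProduct n 1 * Gamma s :=
  eqOn_mul_Gamma_of_log_convex (convexOn_log_gaussProduct hn)
    (fun hy ↦ gaussProduct_add_one hn hy.ne') (gaussProduct_pos hn) hs

end Multiplication

theorem Gamma_one_third_mul_Gamma_two_thirds : Gamma (1 / 3) * Gamma (2 / 3) = 2 * π / √3 := by
  have hreflection := Gamma_mul_Gamma_one_sub (1 / 3)
  rw [show (1 : ℝ) - 1 / 3 = 2 / 3 by norm_num, mul_one_div, sin_pi_div_three] at hreflection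
  rw [hreflection]
  field_simp

theorem Gamma_mul_Gamma_add_one_third_mul_Gamma_add_two_thirds {s : ℝ} (hs : 0 < s) :
    Gamma s * Gamma (s + 1 / 3) * Gamma (s + 2 / 3) =
      Gamma (3 * s) * 3 ^ (1 / 2 - 3 * s) * (2 * π) := by
  have hgauss := gaussProduct_eq_gaussProduct_one_mul_Gamma (n := 3) three_ne_zero
    (mul_pos three_pos hs)
  have hone : gaussProduct 3 1 = 2 * π / √3 := by
    rw [← Gamma_one_third_mul_Gamma_two_thirds]
    norm_num [gaussProduct, Finset.prod_range_succ]
  have hthree : gaussProduct 3 (3 * s) =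
      3 ^ (3 * s - 1) * (Gamma s * Gamma (s + 1 / 3) * Gamma (s + 2 / 3)) := by
    simp [gaussProduct, Finset.prod_range_succ, add_div]
  have hpow : (3 : ℝ) ^ (3 * s - 1) * 3 ^ (1 / 2 - 3 * s) = (√3)⁻¹ := by
    rw [sqrt_eq_rpow, ← rpow_add three_pos, ← rpow_neg three_pos.le]
    ring_nf
  rw [hone, hthree] at hgauss
  refine mul_left_cancel₀ (rpow_pos_of_pos three_pos (3 * s - 1)).ne' (hgauss.trans ?_)
  linear_combination (-2 * π * Gamma (3 * s)) * hpow

theorem sin_five_pi_div_twelve : sin (5 * π / 12) = √2 * (√3 + 1) / 4 := by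
  rw [show 5 * π / 12 = π / 4 + π / 6 by ring, sin_add, sin_pi_div_four, cos_pi_div_four,
    sin_pi_div_six, cos_pi_div_six]
  ring

theorem Gamma_one_sixth : Gamma (1 / 6) = 2 ^ (-1 / 3 : ℝ) * √3 * Gamma (1 / 3) ^ 2 / √π := by
  have hduplication : Gamma (1 / 6) * Gamma (2 / 3) = Gamma (1 / 3) * 2 ^ (2 / 3 : ℝ) * √π := by
    convert! Gamma_mul_Gamma_add_half (1 / 6) using 3 <;> norm_num
  have hreflection := Gamma_one_third_mul_Gamma_two_thirds
  have hpow : (2 : ℝ) ^ (2 / 3 : ℝ) = 2 ^ (-1 / 3 : ℝ) * 2 := by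
    rw [← rpow_add_one two_ne_zero]
    norm_num
  have hΓ : Gamma (2 / 3) ≠ 0 := by positivity
  refine mul_right_cancel₀ hΓ ?_
  calc
    Gamma (1 / 6) * Gamma (2 / 3) = 2 ^ (-1 / 3 : ℝ) * Gamma (1 / 3) * (2 * √π) := by
      rw [hduplication, hpow]
      ring
    _ = 2 ^ (-1 / 3 : ℝ) * Gamma (1 / 3) * (√3 * (2 * π / √3) / √π) := by
      rw [mul_div_cancel₀ _ (by positivity), mul_div_assoc, div_sqrt]
    _ = 2 ^ (-1 / 3 : ℝ) * √3 * Gamma (1 / 3) ^ 2 / √π * Gamma (2 / 3) := by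
      rw [← hreflection]
      ring

theorem Gamma_one_twelfth_mul_Gamma_five_twelfths :
    Gamma (1 / 12) * Gamma (5 / 12) = √2 * 3 ^ (1 / 4 : ℝ) * Gamma (1 / 4) ^ 2 := by
  have htriplication : Gamma (1 / 12) * Gamma (5 / 12) * Gamma (3 / 4) =
      Gamma (1 / 4) * 3 ^ (1 / 4 : ℝ) * (2 * π) := by
    convert! Gamma_mul_Gamma_add_one_third_mul_Gamma_add_two_thirds
      (s := 1 / 12) (by norm_num) using 3 <;> norm_num
  have hreflection : Gamma (1 / 4) * Gamma (3 / 4) = √2 * π := by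
    have h := Gamma_mul_Gamma_one_sub (1 / 4)
    rw [show (1 : ℝ) - 1 / 4 = 3 / 4 by norm_num, mul_one_div, sin_pi_div_four] at h
    rw [h, div_div_eq_mul_div, mul_div_assoc, div_sqrt, mul_comm]
  have hΓ : Gamma (3 / 4) ≠ 0 := by positivity
  refine mul_right_cancel₀ hΓ ?_
  calc
    Gamma (1 / 12) * Gamma (5 / 12) * Gamma (3 / 4)
      = √2 * 3 ^ (1 / 4 : ℝ) * Gamma (1 / 4) * (√2 * π) := by
      rw [htriplication]
      linear_combination (-Gamma (1 / 4) * 3 ^ (1 / 4 : ℝ) * π) * mul_self_sqrt zero_le_two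
    _ = √2 * 3 ^ (1 / 4 : ℝ) * Gamma (1 / 4) ^ 2 * Gamma (3 / 4) := by
      rw [← hreflection]
      ring

theorem Gamma_one_twelfth_div_Gamma_five_twelfths :
    Gamma (1 / 12) / Gamma (5 / 12) = √3 * (√3 + 1) * Gamma (1 / 3) ^ 2 / (2 * π) := by
  have hduplication : Gamma (1 / 12) * Gamma (7 / 12) = Gamma (1 / 6) * 2 ^ (5 / 6 : ℝ) * √π := by
    convert! Gamma_mul_Gamma_add_half (1 / 12) using 3 <;> norm_num
  have hreflection : Gamma (5 / 12) * Gamma (7 / 12) = π / (√2 * (√3 + 1) / 4) := by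
    rw [← sin_five_pi_div_twelve]
    convert! Gamma_mul_Gamma_one_sub (5 / 12) using 3 <;> ring_nf
  have hpow : (2 : ℝ) ^ (-1 / 3 : ℝ) * 2 ^ (5 / 6 : ℝ) = √2 := by
    rw [← rpow_add two_pos, sqrt_eq_rpow]
    norm_num
  have hΓ : Gamma (7 / 12) ≠ 0 := by positivity
  calc
    Gamma (1 / 12) / Gamma (5 / 12)
      = Gamma (1 / 12) * Gamma (7 / 12) / (Gamma (5 / 12) * Gamma (7 / 12)) :=
      (mul_div_mul_right _ _ hΓ).symm
    _ = 2 ^ (-1 / 3 : ℝ) * 2 ^ (5 / 6 : ℝ) * √3 * Gamma (1 / 3) ^ 2 /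
          (π / (√2 * (√3 + 1) / 4)) := by
      rw [hduplication, hreflection, Gamma_one_sixth]
      field_simp
    _ = √3 * (√3 + 1) * Gamma (1 / 3) ^ 2 / (2 * π) := by
      rw [hpow]
      field_simp
      norm_num

theorem Gamma_one_twelfth :
    Gamma (1 / 12) = 2 ^ (-1 / 4 : ℝ) * 3 ^ (3 / 8 : ℝ) * √(√3 + 1) *
      Gamma (1 / 3) * Gamma (1 / 4) / √π := by
  have h12 : 0 ≤ Gamma (1 / 12) := by positivity
  have h512 : Gamma (5 / 12) ≠ 0 := by positivity
  have htwo : ((2 : ℝ) ^ (-1 / 4 : ℝ)) ^ 2 = √2 / 2 := by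
    rw [← rpow_mul_natCast zero_le_two, sqrt_div_self, sqrt_eq_rpow, one_div,
      ← rpow_neg zero_le_two]
    norm_num
  have hthree : ((3 : ℝ) ^ (3 / 8 : ℝ)) ^ 2 = 3 ^ (1 / 4 : ℝ) * √3 := by
    rw [← rpow_mul_natCast zero_le_three, sqrt_eq_rpow, ← rpow_add three_pos]
    norm_num
  refine (pow_left_inj₀ h12 (by positivity) two_ne_zero).mp ?_
  calc
    Gamma (1 / 12) ^ 2
      = Gamma (1 / 12) * Gamma (5 / 12) * (Gamma (1 / 12) / Gamma (5 / 12)) := by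
      rw [mul_assoc, mul_div_cancel₀ _ h512, sq]
    _ = √2 / 2 * (3 ^ (1 / 4 : ℝ) * √3) * (√3 + 1) * Gamma (1 / 3) ^ 2 * Gamma (1 / 4) ^ 2 / π := by
      rw [Gamma_one_twelfth_mul_Gamma_five_twelfths, Gamma_one_twelfth_div_Gamma_five_twelfths]
      field_simp
    _ = _ := by
      simp only [div_pow, mul_pow, htwo, hthree, sq_sqrt (by positivity : 0 ≤ √3 + 1),
        sq_sqrt pi_pos.le]

theorem gamma_thirteen_twentyfourths :
    Real.Gamma (13/24) =
      (2:ℝ) ^ ((2:ℝ)/3) * (3:ℝ) ^ ((3:ℝ)/8) * Real.sqrt (Real.sqrt 3 + 1) *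
        Real.Gamma (1/3) * Real.Gamma (1/4) * (Real.Gamma (1/24))⁻¹ := by
  have hduplication :
      Gamma (1 / 24) * Gamma (13 / 24) = Gamma (1 / 12) * 2 ^ (11 / 12 : ℝ) * √π := by
    convert! Gamma_mul_Gamma_add_half (1 / 24) using 3 <;> norm_num
  have hpow : (2 : ℝ) ^ (-1 / 4 : ℝ) * 2 ^ (11 / 12 : ℝ) = 2 ^ (2 / 3 : ℝ) := by
    rw [← rpow_add two_pos]
    norm_num
  have hΓ : Gamma (1 / 24) ≠ 0 := by positivity
  rw [eq_mul_inv_iff_mul_eq₀ hΓ, mul_comm, hduplication, Gamma_one_twelfth, ← hpow]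
  field_simp
end
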